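/- arXiv:math/0012155 — 2 statements merged into one kernel-verified Lean document; each statement's English description precedes it below -/
import Mathlib

section
/- For every g ∈ SL_n(F((t))) there exist a unique permutation σ ∈ S_n and a unique vector a ∈ ℤ^n with Σ_k a_k = 0 such that g ∈ D'·m·I for some monomial matrix m ∈ SL_n(F((t))) whose nonzero entries are exactly m_{σ(k),k} = ε_k·t^{a_k} with ε_k ∈ {1,−1}; uniqueness means that if m and m' are such monomial matrices attached to (σ,a) and (σ',a') and the sets D'·m·I and D'·m'·I intersect, then (σ,a) = (σ',a'). -/
/-!
Iwasawa–Bruhat type decomposition for `SL_n(F((t)))` with respect to the pair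
`(D', I)`, where `D' = T(F[[t]])·N(F((t)))` is the "connected component of
unity" of the Borel subgroup and `I` is the Iwahori subgroup: every
`g ∈ SL_n(F((t)))` lies in `D'·m·I` for a monomial matrix `m` attached to a
unique element `(σ, a)` of the affine Weyl group.
-/

noncomputable section

/-- `f ∈ F[[t]]`, i.e. the Laurent series `f` has no negative coefficients. -/
def LaurentIsIntegral (F : Type) [Field F] (f : LaurentSeries F) : Prop :=
  ∀ m : ℤ, m < 0 → f.coeff m = 0

/-- The local parameter `t` of `F((t))`. -/
def tparam (F : Type) [Field F] : LaurentSeries F := HahnSeries.single 1 1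

/-- `D' = T(F[[t]])·N(F((t)))`: upper triangular matrices in `SL_n(F((t)))` all of
whose diagonal entries lie in `F[[t]]ˣ` (power series with nonzero constant term). -/
def ConnBorel (F : Type) [Field F] (n : ℕ) :
    Set (Matrix.SpecialLinearGroup (Fin n) (LaurentSeries F)) :=
  {g | (∀ i j : Fin n, j < i → (g : Matrix (Fin n) (Fin n) (LaurentSeries F)) i j = 0) ∧
    ∀ i : Fin n, LaurentIsIntegral F ((g : Matrix (Fin n) (Fin n) (LaurentSeries F)) i i) ∧
      ((g : Matrix (Fin n) (Fin n) (LaurentSeries F)) i i).coeff 0 ≠ 0}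

/-- The Iwahori subgroup of `SL_n(F((t)))`: matrices with entries in `F[[t]]`
whose reduction mod `t` is upper triangular. -/
def Iwahori (F : Type) [Field F] (n : ℕ) :
    Set (Matrix.SpecialLinearGroup (Fin n) (LaurentSeries F)) :=
  {g | (∀ i j : Fin n, LaurentIsIntegral F ((g : Matrix (Fin n) (Fin n) (LaurentSeries F)) i j)) ∧
    ∀ i j : Fin n, j < i → ((g : Matrix (Fin n) (Fin n) (LaurentSeries F)) i j).coeff 0 = 0}

/-- `m` is a monomial matrix attached to `(σ, a)`: its nonzero entries are exactly
`m_{σ k, k} = ε_k · t^{a_k}` with signs `ε_k ∈ {1, -1}`. -/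
def IsAffineLifting (F : Type) [Field F] (n : ℕ) (σ : Equiv.Perm (Fin n))
    (a : Fin n → ℤ) (m : Matrix.SpecialLinearGroup (Fin n) (LaurentSeries F)) : Prop :=
  ∃ ε : Fin n → LaurentSeries F, (∀ k, ε k = 1 ∨ ε k = -1) ∧
    ∀ i k : Fin n, (m : Matrix (Fin n) (Fin n) (LaurentSeries F)) i k =
      if i = σ k then ε k * (tparam F) ^ (a k) else 0

/-!
Everything works over a field with a valuation `v` whose value group is split by a homomorphism
`s`; for `F((t))` this is `a ↦ t ^ a`.

Existence. Process the rows of `g` from the bottom up. In the current row take as pivot the leftmost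
entry of maximal absolute value: the column operations clearing the rest of the row then lie in `I`,
and the row operations clearing the column above the pivot lie in `N`. Rows already processed are
not disturbed, so the double coset `D' g I` contains a monomial matrix, and a diagonal matrix with
unit entries normalises its nonzero entries to `± s a`.

Uniqueness. If `m = d m' b` with `d ∈ D'` and `b ∈ I`, put `τ = σ'⁻¹ σ`. Comparing the entries of
`d⁻¹ m = m' b` at `(σ k, k)` gives `v (w k) = v (w' (τ k)) * v (b (τ k) k)`, where `w` and `w'` are
the nonzero entries of `m` and `m'`. As `b` is integral, `v (w k) ≤ v (w' (τ k))`; both sides have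
product `1`, so they are equal and every `b (τ k) k` is a unit. Since `b` is upper triangular
modulo the maximal ideal, `τ k ≤ k` for all `k`, and a permutation with this property is trivial.
-/

section Development

open Matrix DoubleCoset

section Triangular

variable {ι R : Type*} [Fintype ι] [LinearOrder ι] [CommRing R]

theorem mul_apply_self_of_isUpperTriangular {A B : Matrix ι ι R} (hA : A.IsUpperTriangular)
    (hB : B.IsUpperTriangular) (i : ι) : (A * B) i i = A i i * B i i := by
  rw [mul_apply, Fintype.sum_eq_single i]
  intro k hk
  obtain hki | hik := hk.lt_or_gt
  · rw [hA hki, zero_mul]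
  · rw [hB hik, mul_zero]

variable (ι R) in
/-- The standard Borel subgroup of `SL_ι(R)`. -/
def upperTriangularSubgroup : Subgroup (Matrix.SpecialLinearGroup ι R) where
  carrier := {g | (g : Matrix ι ι R).IsUpperTriangular}
  mul_mem' hg hh := BlockTriangular.mul hg hh
  one_mem' := blockTriangular_one
  inv_mem' {g} hg := by
    have : Invertible (g : Matrix ι ι R) := invertibleOfIsUnitDet _ (by simp)
    have hinv : ((g⁻¹ : Matrix.SpecialLinearGroup ι R) : Matrix ι ι R) = (g : Matrix ι ι R)⁻¹ := by
      simp [inv_def]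
    change ((g⁻¹ : Matrix.SpecialLinearGroup ι R) : Matrix ι ι R).IsUpperTriangular
    rw [hinv]
    exact blockTriangular_inv_of_blockTriangular hg

end Triangular

section Subgroups

variable {ι K Γ₀ : Type*} [Fintype ι] [LinearOrder ι] [Field K]
  [LinearOrderedCommGroupWithZero Γ₀] (v : Valuation K Γ₀)

variable (ι) in
/-- `D' = T(𝒪)·N(K)`, the connected component of unity of the Borel subgroup of `SL_ι(K)`, where
`𝒪` is the valuation ring of `v`. -/
def connBorelSubgroup : Subgroup (Matrix.SpecialLinearGroup ι K) where
  carrier := {g | g ∈ upperTriangularSubgroup ι K ∧ ∀ i, v ((g : Matrix ι ι K) i i) = 1}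
  mul_mem' := by
    rintro g h ⟨hg, hgv⟩ ⟨hh, hhv⟩
    refine ⟨mul_mem hg hh, fun i => ?_⟩
    have hmul := congrArg v (mul_apply_self_of_isUpperTriangular hg hh i)
    rwa [map_mul, hgv, hhv, one_mul] at hmul
  one_mem' := ⟨one_mem _, by simp⟩
  inv_mem' := by
    rintro g ⟨hg, hgv⟩
    refine ⟨inv_mem hg, fun i => ?_⟩
    have hmul := congrArg v (mul_apply_self_of_isUpperTriangular hg (inv_mem hg) i)
    rw [map_mul, hgv, one_mul, ← Matrix.SpecialLinearGroup.coe_mul, mul_inv_cancel,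
      Matrix.SpecialLinearGroup.coe_one, one_apply_eq, map_one] at hmul
    exact hmul.symm

theorem mem_connBorelSubgroup {g : Matrix.SpecialLinearGroup ι K} :
    g ∈ connBorelSubgroup ι v ↔
      (g : Matrix ι ι K).IsUpperTriangular ∧ ∀ i, v (g i i) = 1 :=
  Iff.rfl

variable (ι) in
/-- The Iwahori subgroup of `SL_ι(K)`: the matrices over the valuation ring of `v` whose reduction
modulo the maximal ideal is upper triangular. -/
def iwahoriSubgroup : Subgroup (Matrix.SpecialLinearGroup ι K) :=
  ((upperTriangularSubgroup ι (IsLocalRing.ResidueField v.valuationSubring)).comap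
    (Matrix.SpecialLinearGroup.map (IsLocalRing.residue v.valuationSubring))).map
    (Matrix.SpecialLinearGroup.map v.valuationSubring.subtype)

theorem residue_eq_zero_iff_valuation_lt_one {x : v.valuationSubring} :
    IsLocalRing.residue v.valuationSubring x = 0 ↔ v x < 1 := by
  rw [IsLocalRing.residue_eq_zero_iff, v.mem_maximalIdeal_iff]

theorem mem_iwahoriSubgroup {g : Matrix.SpecialLinearGroup ι K} :
    g ∈ iwahoriSubgroup ι v ↔
      (∀ i j, v (g i j) ≤ 1) ∧ ∀ i j, j < i → v (g i j) < 1 := by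
  constructor
  · rintro ⟨h, hh, rfl⟩
    refine ⟨fun i j => (h i j).2, fun i j hji => ?_⟩
    exact (residue_eq_zero_iff_valuation_lt_one v).1 (hh hji)
  · rintro ⟨hint, hlt⟩
    let M : Matrix ι ι v.valuationSubring := of fun i j => ⟨g i j, hint i j⟩
    have hM : v.valuationSubring.subtype.mapMatrix M = g := rfl
    have hdet : M.det = 1 := Subtype.ext <| by
      exact (RingHom.map_det v.valuationSubring.subtype M).trans (hM ▸ g.det_coe)
    exact ⟨⟨M, hdet⟩, fun i j hji => (residue_eq_zero_iff_valuation_lt_one v).2 (hlt i j hji),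
      Subtype.ext hM⟩

end Subgroups

section Monomial

variable {ι R : Type*} [DecidableEq ι]

/-- The monomial matrix whose `k`-th column is `w k` times the `σ k`-th standard vector. -/
def monomialMatrix [Zero R] (σ : Equiv.Perm ι) (w : ι → R) : Matrix ι ι R :=
  of fun i k => if i = σ k then w k else 0

theorem monomialMatrix_apply [Zero R] (σ : Equiv.Perm ι) (w : ι → R) (i k : ι) :
    monomialMatrix σ w i k = if i = σ k then w k else 0 :=
  rfl

variable [Fintype ι]

theorem diagonal_mul_monomialMatrix [NonUnitalNonAssocSemiring R] (d : ι → R) (σ : Equiv.Perm ι)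
    (w : ι → R) :
    diagonal d * monomialMatrix σ w = monomialMatrix σ fun k => d (σ k) * w k := by
  ext i k
  simp +contextual [monomialMatrix_apply]

theorem mul_monomialMatrix_apply [NonUnitalNonAssocSemiring R] (A : Matrix ι ι R)
    (σ : Equiv.Perm ι) (w : ι → R) (i k : ι) :
    (A * monomialMatrix σ w) i k = A i (σ k) * w k := by
  simp [mul_apply, monomialMatrix_apply]

theorem monomialMatrix_mul_apply [NonUnitalNonAssocSemiring R] (A : Matrix ι ι R)
    (σ : Equiv.Perm ι) (w : ι → R) (i k : ι) :
    (monomialMatrix σ w * A) i k = w (σ.symm i) * A (σ.symm i) k := by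
  simp [mul_apply, monomialMatrix_apply, ← Equiv.symm_apply_eq]

theorem det_monomialMatrix [CommRing R] (σ : Equiv.Perm ι) (w : ι → R) :
    (monomialMatrix σ w).det = ((Equiv.Perm.sign σ : ℤ) : R) * ∏ k, w k := by
  have h : monomialMatrix σ w = (diagonal w).submatrix σ.symm id := by
    ext i k
    simp only [monomialMatrix_apply, submatrix_apply, id, diagonal_apply, Equiv.symm_apply_eq]
    split_ifs with hik <;> simp [hik]
  rw [h, det_permute, det_diagonal, Equiv.Perm.sign_symm]

end Monomial

section Pivot

variable {ι R : Type*} [Zero R]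

/-- The entry `(r, c)` is a pivot of `M`: it is the only nonzero entry of its row and of its
column. -/
structure IsPivot (M : Matrix ι ι R) (r c : ι) : Prop where
  ne_zero : M r c ≠ 0
  row_eq_zero : ∀ k, k ≠ c → M r k = 0
  col_eq_zero : ∀ i, i ≠ r → M i c = 0

theorem IsPivot.congr {M N : Matrix ι ι R} {r c : ι} (h : IsPivot M r c)
    (hrow : ∀ k, N r k = M r k) (hcol : ∀ i, N i c = M i c) : IsPivot N r c where
  ne_zero := by simpa only [hrow] using h.ne_zero
  row_eq_zero := by simpa only [hrow] using h.row_eq_zero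
  col_eq_zero := by simpa only [hcol] using h.col_eq_zero

theorem exists_eq_monomialMatrix [Finite ι] [DecidableEq ι] {M : Matrix ι ι R}
    (h : ∀ r, ∃ c, IsPivot M r c) : ∃ σ w, M = monomialMatrix σ w := by
  choose c hc using h
  have hinj : Function.Injective c := fun r r' hrr' => by
    by_contra hne
    exact (hc r).ne_zero (hrr' ▸ (hc r').col_eq_zero r hne)
  let τ : Equiv.Perm ι := Equiv.ofBijective c (Finite.injective_iff_bijective.1 hinj)
  refine ⟨τ.symm, fun k => M (τ.symm k) k, Matrix.ext fun i k => ?_⟩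
  rw [monomialMatrix_apply]
  split_ifs with hik
  · rw [hik]
  · exact (hc i).row_eq_zero k fun hk => hik (τ.symm_apply_eq.2 hk).symm

end Pivot

section Transvection

variable {ι R : Type*} [Fintype ι] [DecidableEq ι] [CommRing R]

/-- The transvection `1 + u wᵀ`, which has determinant `1` when `w` is orthogonal to `u`. -/
def rankOneTransvection (u w : ι → R) (h : w ⬝ᵥ u = 0) : Matrix.SpecialLinearGroup ι R :=
  ⟨1 + vecMulVec u w, by
    rw [vecMulVec_eq Unit, det_one_add_replicateCol_mul_replicateRow, h, add_zero]⟩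

/-- The column operation adding `x k` times column `j` to column `k`, for all `k`. -/
def colTransvection (j : ι) (x : ι → R) (hx : x j = 0) : Matrix.SpecialLinearGroup ι R :=
  rankOneTransvection (Pi.single j 1) x (by simpa using hx)

/-- The row operation adding `y i` times row `r` to row `i`, for all `i`. -/
def rowTransvection (r : ι) (y : ι → R) (hy : y r = 0) : Matrix.SpecialLinearGroup ι R :=
  rankOneTransvection y (Pi.single r 1) (by simpa using hy)

theorem colTransvection_apply (j : ι) (x : ι → R) (hx : x j = 0) (i k : ι) :
    colTransvection j x hx i k = (1 : Matrix ι ι R) i k + if i = j then x k else 0 := by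
  simp [colTransvection, rankOneTransvection, vecMulVec_apply, Pi.single_apply]

theorem rowTransvection_apply (r : ι) (y : ι → R) (hy : y r = 0) (i k : ι) :
    rowTransvection r y hy i k = (1 : Matrix ι ι R) i k + if k = r then y i else 0 := by
  simp [rowTransvection, rankOneTransvection, vecMulVec_apply, Pi.single_apply]

theorem mul_colTransvection_apply (M : Matrix ι ι R) (j : ι) (x : ι → R) (hx : x j = 0)
    (i k : ι) : (M * (colTransvection j x hx : Matrix ι ι R)) i k = M i k + M i j * x k := by
  simp [colTransvection, rankOneTransvection, mul_add, mul_vecMulVec, vecMulVec_apply]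

theorem rowTransvection_mul_apply (M : Matrix ι ι R) (r : ι) (y : ι → R) (hy : y r = 0)
    (i k : ι) : ((rowTransvection r y hy : Matrix ι ι R) * M) i k = M i k + y i * M r k := by
  simp [rowTransvection, rankOneTransvection, add_mul, vecMulVec_mul, vecMulVec_apply]

theorem IsPivot.mul_colTransvection {M : Matrix ι ι R} {r c j : ι} {x : ι → R}
    (h : IsPivot M r c) (hx : x j = 0) (hrj : M r j = 0) (hxc : x c = 0) :
    IsPivot (M * (colTransvection j x hx : Matrix ι ι R)) r c :=
  h.congr (by simp [mul_colTransvection_apply, hrj]) (by simp [mul_colTransvection_apply, hxc])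

theorem IsPivot.rowTransvection_mul {M : Matrix ι ι R} {r c s : ι} {y : ι → R}
    (h : IsPivot M r c) (hy : y s = 0) (hsc : M s c = 0) (hyr : y r = 0) :
    IsPivot ((rowTransvection s y hy : Matrix ι ι R) * M) r c :=
  h.congr (by simp [rowTransvection_mul_apply, hyr]) (by simp [rowTransvection_mul_apply, hsc])

end Transvection

theorem exists_leftmost_max {ι α : Type*} [Finite ι] [Nonempty ι] [LinearOrder ι] [LinearOrder α]
    (f : ι → α) : ∃ j, (∀ k, f k ≤ f j) ∧ ∀ k, k < j → f k < f j := by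
  obtain ⟨j, hj⟩ := Finite.exists_max fun k => toLex (f k, OrderDual.toDual k)
  simp only [Prod.Lex.toLex_le_toLex, OrderDual.toDual_le_toDual] at hj
  exact ⟨j, fun k => (hj k).elim le_of_lt fun h => h.1.le,
    fun k hk => (hj k).resolve_right fun h => h.2.not_gt hk⟩

section Elimination

variable {ι K Γ₀ : Type*} [Fintype ι] [LinearOrder ι] [Field K]
  [LinearOrderedCommGroupWithZero Γ₀] (v : Valuation K Γ₀)

/-- The double coset `D' g I`. -/
abbrev iwasawaBruhatCell (g : Matrix.SpecialLinearGroup ι K) :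
    Set (Matrix.SpecialLinearGroup ι K) :=
  doubleCoset g (connBorelSubgroup ι v) (iwahoriSubgroup ι v)

theorem colTransvection_mem_iwahoriSubgroup {j : ι} {x : ι → K} (hx : x j = 0)
    (hle : ∀ k, v (x k) ≤ 1) (hlt : ∀ k, k < j → v (x k) < 1) :
    colTransvection j x hx ∈ iwahoriSubgroup ι v := by
  rw [mem_iwahoriSubgroup]
  refine ⟨fun i k => ?_, fun i k hki => ?_⟩
  · rw [colTransvection_apply]
    refine v.map_add_le ?_ ?_
    · rw [one_apply]; split_ifs <;> simp
    · split_ifs <;> simp [hle]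
  · rw [colTransvection_apply, one_apply_ne hki.ne', zero_add]
    split_ifs with hij
    · exact hlt k (hij ▸ hki)
    · simp

theorem rowTransvection_mem_connBorelSubgroup {r : ι} {y : ι → K} (hy : y r = 0)
    (hgt : ∀ i, r < i → y i = 0) : rowTransvection r y hy ∈ connBorelSubgroup ι v := by
  rw [mem_connBorelSubgroup]
  refine ⟨fun i k (hki : k < i) => ?_, fun i => ?_⟩
  · rw [rowTransvection_apply, one_apply_ne hki.ne', zero_add]
    split_ifs with hkr
    · exact hgt i (hkr ▸ hki)
    · rfl
  · rw [rowTransvection_apply, one_apply_eq]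
    split_ifs with hir <;> simp [hir, hy]

-- Maximality of the pivot makes the coefficients of the column operation integral; its being the
-- leftmost puts those below the diagonal into the maximal ideal.
theorem exists_mem_iwasawaBruhatCell_row_eq_zero (g : Matrix.SpecialLinearGroup ι K) (r : ι) :
    ∃ g' ∈ iwasawaBruhatCell v g, ∃ j, g' r j ≠ 0 ∧ (∀ k, k ≠ j → g' r k = 0) ∧
      ∀ i c, i ≠ r → IsPivot (g : Matrix ι ι K) i c → IsPivot (g' : Matrix ι ι K) i c := by
  have : Nonempty ι := ⟨r⟩
  obtain ⟨j, hmax, hleft⟩ := exists_leftmost_max fun k => v (g r k)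
  have hj : g r j ≠ 0 := fun hj => g.row_ne_zero r <| funext fun k =>
    v.zero_iff.1 <| le_zero_iff.1 <| by simpa [hj] using hmax k
  have hvj : 0 < v (g r j) := v.pos_iff.2 hj
  let x : ι → K := fun k => if k = j then 0 else -(g r k / g r j)
  have hx : x j = 0 := if_pos rfl
  have hxk {k : ι} (hk : k ≠ j) : x k = -(g r k / g r j) := if_neg hk
  have hvx {k : ι} (hk : k ≠ j) : v (x k) = v (g r k) / v (g r j) := by
    rw [hxk hk, Valuation.map_neg, map_div₀]
  have hmem : colTransvection j x hx ∈ iwahoriSubgroup ι v := by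
    refine colTransvection_mem_iwahoriSubgroup v hx (fun k => ?_) fun k hk => ?_
    · obtain rfl | hk := eq_or_ne k j
      · simp [hx]
      · rw [hvx hk]
        exact div_le_one_of_le₀ (hmax k) zero_le
    · rw [hvx hk.ne]
      exact (div_lt_one₀ hvj).2 (hleft k hk)
  refine ⟨g * colTransvection j x hx,
    mem_doubleCoset.2 ⟨1, one_mem _, _, hmem, by rw [one_mul]⟩, j, ?_, fun k hk => ?_,
    fun i c hi hpivot => ?_⟩
  · simpa [mul_colTransvection_apply, hx] using hj
  · rw [Matrix.SpecialLinearGroup.coe_mul, mul_colTransvection_apply, hxk hk]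
    field_simp
    ring
  · have hjc : j ≠ c := fun h => hj (h ▸ hpivot.col_eq_zero r hi.symm)
    refine hpivot.mul_colTransvection hx (hpivot.row_eq_zero j hjc) ?_
    simp [hxk hjc.symm, hpivot.col_eq_zero r hi.symm]

theorem exists_mem_iwasawaBruhatCell_isPivot {g : Matrix.SpecialLinearGroup ι K} {r j : ι}
    (hj : g r j ≠ 0) (hrow : ∀ k, k ≠ j → g r k = 0) (hcol : ∀ i, r < i → g i j = 0) :
    ∃ g' ∈ iwasawaBruhatCell v g, IsPivot (g' : Matrix ι ι K) r j ∧
      ∀ i c, i ≠ r → IsPivot (g : Matrix ι ι K) i c → IsPivot (g' : Matrix ι ι K) i c := by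
  let y : ι → K := fun i => if i = r then 0 else -(g i j / g r j)
  have hy : y r = 0 := if_pos rfl
  have hyi {i : ι} (hi : i ≠ r) : y i = -(g i j / g r j) := if_neg hi
  have hmem : rowTransvection r y hy ∈ connBorelSubgroup ι v :=
    rowTransvection_mem_connBorelSubgroup v hy fun i hi => by simp [hyi hi.ne', hcol i hi]
  refine ⟨rowTransvection r y hy * g,
    mem_doubleCoset.2 ⟨_, hmem, 1, one_mem _, by rw [mul_one]⟩,
    ⟨?_, fun k hk => ?_, fun i hi => ?_⟩, fun i c hi hpivot => ?_⟩
  · simpa [rowTransvection_mul_apply, hy] using hj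
  · simpa [rowTransvection_mul_apply, hy] using hrow k hk
  · rw [Matrix.SpecialLinearGroup.coe_mul, rowTransvection_mul_apply, hyi hi]
    field_simp
    ring
  · have hjc : j ≠ c := fun h => hj (h ▸ hpivot.col_eq_zero r hi.symm)
    refine hpivot.rowTransvection_mul hy (hpivot.col_eq_zero r hi.symm) ?_
    simp [hyi hi, hpivot.row_eq_zero j hjc]

theorem exists_mem_iwasawaBruhatCell_isPivot_of_le {g : Matrix.SpecialLinearGroup ι K} {r : ι}
    (hg : ∀ i, r < i → ∃ c, IsPivot (g : Matrix ι ι K) i c) :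
    ∃ g' ∈ iwasawaBruhatCell v g, ∀ i, r ≤ i → ∃ c, IsPivot (g' : Matrix ι ι K) i c := by
  obtain ⟨g₁, hg₁, j, hj, hrow, hpivot₁⟩ := exists_mem_iwasawaBruhatCell_row_eq_zero v g r
  have hbelow (i : ι) (hi : r < i) : ∃ c, IsPivot (g₁ : Matrix ι ι K) i c :=
    (hg i hi).imp fun c => hpivot₁ i c hi.ne'
  have hcol (i : ι) (hi : r < i) : g₁ i j = 0 := by
    obtain ⟨c, hc⟩ := hbelow i hi
    exact hc.row_eq_zero j fun hjc => hj (hjc ▸ hc.col_eq_zero r hi.ne)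
  obtain ⟨g₂, hg₂, hr, hpivot₂⟩ := exists_mem_iwasawaBruhatCell_isPivot v hj hrow hcol
  refine ⟨g₂, (doubleCoset_eq_of_mem hg₁).subset hg₂, fun i hi => ?_⟩
  obtain rfl | hi := hi.eq_or_lt
  · exact ⟨j, hr⟩
  · exact (hbelow i hi).imp fun c => hpivot₂ i c hi.ne'

theorem exists_mem_iwasawaBruhatCell_isPivot_of_isUpperSet (g : Matrix.SpecialLinearGroup ι K)
    {s : Finset ι} (hs : IsUpperSet (s : Set ι)) :
    ∃ g' ∈ iwasawaBruhatCell v g, ∀ i ∈ s, ∃ c, IsPivot (g' : Matrix ι ι K) i c := by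
  induction s using Finset.induction_on_min with
  | empty => exact ⟨g, mem_doubleCoset_self _ _ g, by simp⟩
  | insert r s hr ih =>
    have hmem {i : ι} (hi : r < i) : i ∈ s :=
      Finset.mem_of_mem_insert_of_ne (hs hi.le (Finset.mem_insert_self r s)) hi.ne'
    have hs' : IsUpperSet (s : Set ι) := fun i k hik hi => hmem ((hr i hi).trans_le hik)
    obtain ⟨g₁, hg₁, hpivot₁⟩ := ih hs'
    obtain ⟨g₂, hg₂, hpivot₂⟩ :=
      exists_mem_iwasawaBruhatCell_isPivot_of_le v fun i hi => hpivot₁ i (hmem hi)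
    refine ⟨g₂, (doubleCoset_eq_of_mem hg₁).subset hg₂, fun i hi => hpivot₂ i ?_⟩
    obtain rfl | hi := Finset.mem_insert.1 hi
    exacts [le_rfl, (hr i hi).le]

theorem exists_mem_iwasawaBruhatCell_eq_monomialMatrix (g : Matrix.SpecialLinearGroup ι K) :
    ∃ g' ∈ iwasawaBruhatCell v g, ∃ σ w, (g' : Matrix ι ι K) = monomialMatrix σ w := by
  obtain ⟨g', hg', hpivot⟩ := exists_mem_iwasawaBruhatCell_isPivot_of_isUpperSet v g
    (s := Finset.univ) (Finset.coe_univ (α := ι) ▸ isUpperSet_univ)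
  exact ⟨g', hg', exists_eq_monomialMatrix fun r => hpivot r (Finset.mem_univ r)⟩

end Elimination

section Splitting

variable {ι K Γ₀ G : Type*} [Fintype ι] [Field K] [LinearOrderedCommGroupWithZero Γ₀]
  [AddCommGroup G]

/-- `s` splits the valuation: it picks one element of each absolute value, and so identifies the
value group of `v` with `G`. -/
def SplitsValuation (v : Valuation K Γ₀) (s : Multiplicative G →* Kˣ) : Prop :=
  ∀ x : Kˣ, ∃! a : G, v (s (.ofAdd a)) = v x

theorem prod_ofAdd_eq (s : Multiplicative G →* Kˣ) (a : ι → G) :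
    ∏ k, (s (.ofAdd (a k)) : K) = s (.ofAdd (∑ k, a k)) := by
  rw [ofAdd_sum, map_prod, Units.coe_prod]

theorem SplitsValuation.sum_eq_zero {v : Valuation K Γ₀}
    {s : Multiplicative G →* Kˣ} (hs : SplitsValuation v s) {a : ι → G}
    (ha : ∏ k, v (s (.ofAdd (a k))) = 1) : ∑ k, a k = 0 :=
  (hs 1).unique (by rw [← prod_ofAdd_eq, map_prod, ha, Units.val_one, map_one]) (by simp)

end Splitting

section MonomialLift

theorem exists_prod_eq_sign {ι : Type*} [Fintype ι] [DecidableEq ι] (σ : Equiv.Perm ι) :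
    ∃ ε : ι → ℤˣ, ∏ k, ε k = Equiv.Perm.sign σ := by
  obtain _ | ⟨⟨z⟩⟩ := isEmpty_or_nonempty ι
  · exact ⟨1, by simp [Subsingleton.elim σ 1]⟩
  · exact ⟨Pi.mulSingle z (Equiv.Perm.sign σ), by simp⟩

variable {ι K Γ₀ G : Type*} [Fintype ι] [DecidableEq ι] [Field K]
  [LinearOrderedCommGroupWithZero Γ₀] [AddCommGroup G]

theorem prod_valuation_eq_one_of_coe_eq_monomialMatrix (v : Valuation K Γ₀)
    {m : Matrix.SpecialLinearGroup ι K} {σ : Equiv.Perm ι} {w : ι → K}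
    (hm : (m : Matrix ι ι K) = monomialMatrix σ w) : ∏ k, v (w k) = 1 := by
  have hsign : v ((Equiv.Perm.sign σ : ℤ) : K) = 1 := by
    obtain h | h := Int.units_eq_one_or (Equiv.Perm.sign σ) <;> simp [h]
  have hdet := congrArg v m.det_coe
  rwa [hm, det_monomialMatrix, map_mul, hsign, one_mul, map_prod, map_one] at hdet

theorem valuation_pos_of_coe_eq_monomialMatrix (v : Valuation K Γ₀)
    {m : Matrix.SpecialLinearGroup ι K} {σ : Equiv.Perm ι} {w : ι → K}
    (hm : (m : Matrix ι ι K) = monomialMatrix σ w) (k : ι) :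
    0 < v (w k) := by
  have hprod : ∏ k, v (w k) ≠ 0 := prod_valuation_eq_one_of_coe_eq_monomialMatrix v hm ▸ one_ne_zero
  exact zero_lt_iff.2 (Finset.prod_ne_zero_iff.1 hprod k (Finset.mem_univ k))

/-- `m` is a monomial matrix attached to `(σ, a)`: its nonzero entries are
`m_{σ k, k} = ε_k · s(a_k)` with signs `ε_k`. Here `s` generalises the powers of a uniformizer
`a ↦ t ^ a`. -/
def IsMonomialLift (s : Multiplicative G →* Kˣ) (σ : Equiv.Perm ι) (a : ι → G)
    (m : Matrix.SpecialLinearGroup ι K) : Prop :=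
  ∃ ε : ι → K, (∀ k, ε k = 1 ∨ ε k = -1) ∧
    (m : Matrix ι ι K) = monomialMatrix σ fun k => ε k * s (.ofAdd (a k))

variable {s : Multiplicative G →* Kˣ}

theorem IsMonomialLift.exists_eq_monomialMatrix {σ : Equiv.Perm ι} {a : ι → G}
    {m : Matrix.SpecialLinearGroup ι K} (h : IsMonomialLift s σ a m) (v : Valuation K Γ₀) :
    ∃ w : ι → K, (m : Matrix ι ι K) = monomialMatrix σ w ∧
      ∀ k, v (w k) = v (s (.ofAdd (a k))) := by
  obtain ⟨ε, hε, hm⟩ := h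
  refine ⟨_, hm, fun k => ?_⟩
  obtain hk | hk := hε k <;> simp [hk]

theorem IsMonomialLift.sum_eq_zero {v : Valuation K Γ₀}
    (hs : SplitsValuation v s) {σ : Equiv.Perm ι} {a : ι → G} {m : Matrix.SpecialLinearGroup ι K}
    (h : IsMonomialLift s σ a m) : ∑ k, a k = 0 := by
  obtain ⟨w, hw, hv⟩ := h.exists_eq_monomialMatrix v
  exact hs.sum_eq_zero (by
    simpa only [hv] using prod_valuation_eq_one_of_coe_eq_monomialMatrix v hw)

theorem exists_isMonomialLift (s : Multiplicative G →* Kˣ) (σ : Equiv.Perm ι) {a : ι → G}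
    (ha : ∑ k, a k = 0) : ∃ m : Matrix.SpecialLinearGroup ι K, IsMonomialLift s σ a m := by
  obtain ⟨ε, hε⟩ := exists_prod_eq_sign σ
  have hdet : (monomialMatrix σ fun k => ((ε k : ℤ) : K) * s (.ofAdd (a k))).det = 1 := by
    have hεK : ∏ k, ((ε k : ℤ) : K) = ((Equiv.Perm.sign σ : ℤ) : K) := by
      rw [← hε]; push_cast; rfl
    rw [det_monomialMatrix, Finset.prod_mul_distrib, prod_ofAdd_eq, ha, hεK, ← mul_assoc,
      ← Int.cast_mul, ← Units.val_mul, Int.units_mul_self]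
    simp
  refine ⟨⟨_, hdet⟩, fun k => ((ε k : ℤ) : K), fun k => ?_, rfl⟩
  obtain h | h := Int.units_eq_one_or (ε k) <;> simp [h]

end MonomialLift

section Existence

variable {ι K Γ₀ G : Type*} [Fintype ι] [LinearOrder ι] [Field K]
  [LinearOrderedCommGroupWithZero Γ₀] [AddCommGroup G]

theorem exists_mem_connBorelSubgroup_mul_eq (v : Valuation K Γ₀)
    {m m' : Matrix.SpecialLinearGroup ι K} {σ : Equiv.Perm ι} {w w' : ι → K}
    (hm : (m : Matrix ι ι K) = monomialMatrix σ w)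
    (hm' : (m' : Matrix ι ι K) = monomialMatrix σ w') (hv : ∀ k, v (w k) = v (w' k)) :
    ∃ d ∈ connBorelSubgroup ι v, d * m = m' := by
  have hpos := valuation_pos_of_coe_eq_monomialMatrix v hm
  have hw (k : ι) : w k ≠ 0 := v.pos_iff.1 (hpos k)
  let δ : ι → K := fun i => w' (σ.symm i) / w (σ.symm i)
  have hmul : diagonal δ * (m : Matrix ι ι K) = m' := by
    rw [hm, hm', diagonal_mul_monomialMatrix]
    simp [δ, hw]
  have hdet : (diagonal δ).det = 1 := by
    simpa using congrArg det hmul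
  refine ⟨⟨diagonal δ, hdet⟩, (mem_connBorelSubgroup v).2 ⟨blockTriangular_diagonal δ, fun i => ?_⟩,
    Subtype.ext hmul⟩
  simp [δ, hv, ((hv _).symm.trans_gt (hpos _)).ne']

theorem exists_isMonomialLift_mem_iwasawaBruhatCell {v : Valuation K Γ₀}
    {s : Multiplicative G →* Kˣ} (hs : SplitsValuation v s) (g : Matrix.SpecialLinearGroup ι K) :
    ∃ σ a, ∃ m ∈ iwasawaBruhatCell v g, IsMonomialLift s σ a m := by
  obtain ⟨g', hg', σ, w, hw⟩ := exists_mem_iwasawaBruhatCell_eq_monomialMatrix v g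
  have hw0 (k : ι) : w k ≠ 0 := v.pos_iff.1 (valuation_pos_of_coe_eq_monomialMatrix v hw k)
  choose a ha using fun k => (hs (Units.mk0 (w k) (hw0 k))).exists
  have hsum : ∑ k, a k = 0 := hs.sum_eq_zero <| by
    simpa only [ha, Units.val_mk0] using prod_valuation_eq_one_of_coe_eq_monomialMatrix v hw
  obtain ⟨m, hm⟩ := exists_isMonomialLift s σ hsum
  obtain ⟨w', hw', hv⟩ := hm.exists_eq_monomialMatrix v
  obtain ⟨d, hd, rfl⟩ := exists_mem_connBorelSubgroup_mul_eq v hw hw' fun k => by rw [hv, ha]; rfl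
  refine ⟨σ, a, d * g', (doubleCoset_eq_of_mem hg').subset ?_, hm⟩
  exact mem_doubleCoset.2 ⟨d, hd, 1, one_mem _, by rw [mul_one]⟩

end Existence

section Uniqueness

theorem perm_eq_one_of_forall_apply_le {α : Type*} [PartialOrder α] [WellFoundedLT α]
    {τ : Equiv.Perm α} (h : ∀ x, τ x ≤ x) : τ = 1 := by
  ext x
  induction x using WellFoundedLT.induction with
  | ind x ih =>
    exact (h x).eq_of_not_lt fun hlt => hlt.ne (τ.injective (ih _ hlt))

theorem eq_of_le_of_prod_eq {ι Γ₀ : Type*} [Fintype ι] [LinearOrderedCommGroupWithZero Γ₀]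
    {f g : ι → Γ₀} (hpos : ∀ k, 0 < f k) (hle : ∀ k, f k ≤ g k) (hprod : ∏ k, f k = ∏ k, g k) :
    f = g := by
  funext k
  by_contra hne
  exact (Finset.prod_lt_prod (fun i _ => hpos i) (fun i _ => hle i)
    ⟨k, Finset.mem_univ k, (hle k).lt_of_ne hne⟩).ne hprod

variable {ι K Γ₀ G : Type*} [Fintype ι] [LinearOrder ι] [Field K]
  [LinearOrderedCommGroupWithZero Γ₀] [AddCommGroup G] (v : Valuation K Γ₀)

theorem valuation_eq_mul_of_mem_iwasawaBruhatCell {m m' : Matrix.SpecialLinearGroup ι K}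
    {σ σ' : Equiv.Perm ι} {w w' : ι → K} (hm : (m : Matrix ι ι K) = monomialMatrix σ w)
    (hm' : (m' : Matrix ι ι K) = monomialMatrix σ' w') (h : m ∈ iwasawaBruhatCell v m') :
    ∃ b ∈ iwahoriSubgroup ι v, ∀ k,
      v (w k) = v (w' (σ'.symm (σ k))) * v (b (σ'.symm (σ k)) k) := by
  obtain ⟨d, hd, b, hb, h⟩ := mem_doubleCoset.1 h
  refine ⟨b, hb, fun k => ?_⟩
  have hmul : d⁻¹ * m = m' * b := by rw [h]; group
  have hentry : d⁻¹ (σ k) (σ k) * w k = w' (σ'.symm (σ k)) * b (σ'.symm (σ k)) k := by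
    rw [← mul_monomialMatrix_apply, ← hm, ← monomialMatrix_mul_apply, ← hm',
      ← Matrix.SpecialLinearGroup.coe_mul, ← Matrix.SpecialLinearGroup.coe_mul, hmul]
  rw [← map_mul, ← hentry, map_mul, ((mem_connBorelSubgroup v).1 (inv_mem hd)).2, one_mul]

theorem eq_and_valuation_eq_of_mem_iwasawaBruhatCell {m m' : Matrix.SpecialLinearGroup ι K}
    {σ σ' : Equiv.Perm ι} {w w' : ι → K} (hm : (m : Matrix ι ι K) = monomialMatrix σ w)
    (hm' : (m' : Matrix ι ι K) = monomialMatrix σ' w') (h : m ∈ iwasawaBruhatCell v m') :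
    σ = σ' ∧ ∀ k, v (w k) = v (w' k) := by
  obtain ⟨b, hb, hmul⟩ := valuation_eq_mul_of_mem_iwasawaBruhatCell v hm hm' h
  obtain ⟨hint, hlower⟩ := (mem_iwahoriSubgroup v).1 hb
  let τ : Equiv.Perm ι := σ.trans σ'.symm
  have hle (k : ι) : v (w k) ≤ v (w' (τ k)) := by
    rw [hmul]
    exact mul_le_of_le_one_right' (hint _ _)
  have hprod : ∏ k, v (w k) = ∏ k, v (w' (τ k)) := by
    rw [Equiv.prod_comp τ fun k => v (w' k), prod_valuation_eq_one_of_coe_eq_monomialMatrix v hm,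
      prod_valuation_eq_one_of_coe_eq_monomialMatrix v hm']
  have heq := congrFun
    (eq_of_le_of_prod_eq (valuation_pos_of_coe_eq_monomialMatrix v hm) hle hprod)
  have hunit (k : ι) : v (b (τ k) k) = 1 :=
    (mul_eq_left₀ (valuation_pos_of_coe_eq_monomialMatrix v hm' (τ k)).ne').1
      ((hmul k).symm.trans (heq k))
  have hτ : τ = 1 :=
    perm_eq_one_of_forall_apply_le fun k => not_lt.1 fun hk => (hlower _ _ hk).ne (hunit k)
  refine ⟨Equiv.ext fun k => ?_, fun k => by simpa [hτ] using heq k⟩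
  exact (σ'.symm_apply_eq.1 (congrArg (fun τ : Equiv.Perm ι => τ k) hτ))

theorem IsMonomialLift.eq_of_mem_iwasawaBruhatCell {v : Valuation K Γ₀}
    {s : Multiplicative G →* Kˣ} (hs : SplitsValuation v s) {σ σ' : Equiv.Perm ι} {a a' : ι → G}
    {m m' : Matrix.SpecialLinearGroup ι K} (hm : IsMonomialLift s σ a m)
    (hm' : IsMonomialLift s σ' a' m') (h : m ∈ iwasawaBruhatCell v m') : σ = σ' ∧ a = a' := by
  obtain ⟨w, hw, hv⟩ := hm.exists_eq_monomialMatrix v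
  obtain ⟨w', hw', hv'⟩ := hm'.exists_eq_monomialMatrix v
  obtain ⟨hσ, hww'⟩ := eq_and_valuation_eq_of_mem_iwasawaBruhatCell v hw hw' h
  refine ⟨hσ, funext fun k => (hs (s (.ofAdd (a' k)))).unique ?_ rfl⟩
  rw [← hv, hww', hv']

end Uniqueness

theorem iwasawa_bruhat_decomposition_general {ι K Γ₀ G : Type*} [Fintype ι] [LinearOrder ι]
    [Field K] [LinearOrderedCommGroupWithZero Γ₀] [AddCommGroup G] {v : Valuation K Γ₀}
    {s : Multiplicative G →* Kˣ} (hs : SplitsValuation v s) :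
    (∀ g : Matrix.SpecialLinearGroup ι K, ∃ (σ : Equiv.Perm ι) (a : ι → G), ∑ k, a k = 0 ∧
      ∃ m, IsMonomialLift s σ a m ∧ g ∈ iwasawaBruhatCell v m) ∧
    ∀ (σ σ' : Equiv.Perm ι) (a a' : ι → G) (m m' : Matrix.SpecialLinearGroup ι K),
      IsMonomialLift s σ a m → IsMonomialLift s σ' a' m' →
        (iwasawaBruhatCell v m ∩ iwasawaBruhatCell v m').Nonempty → σ = σ' ∧ a = a' := by
  refine ⟨fun g => ?_, fun σ σ' a a' m m' hm hm' h => ?_⟩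
  · obtain ⟨σ, a, m, hmg, hm⟩ := exists_isMonomialLift_mem_iwasawaBruhatCell hs g
    exact ⟨σ, a, hm.sum_eq_zero hs, m, hm,
      (doubleCoset_eq_of_mem hmg).superset (mem_doubleCoset_self _ _ g)⟩
  · rw [Set.inter_comm, ← Set.not_disjoint_iff_nonempty_inter] at h
    exact hm.eq_of_mem_iwasawaBruhatCell hs hm' (mem_doubleCoset_of_not_disjoint h)

section Laurent

variable {F : Type} [Field F]

theorem laurentIsIntegral_iff_valuation_le_one {f : LaurentSeries F} :
    LaurentIsIntegral F f ↔ Valued.v f ≤ 1 := by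
  simpa [LaurentIsIntegral] using
    (LaurentSeries.valuation_le_iff_coeff_lt_eq_zero F (D := 0) (f := f)).symm

theorem laurentSeries_valuation_lt_one_iff {f : LaurentSeries F} :
    Valued.v f < 1 ↔ LaurentIsIntegral F f ∧ f.coeff 0 = 0 := by
  have hle : Valued.v f < 1 ↔ Valued.v f ≤ WithZero.exp (-1 : ℤ) := by
    rw [← WithZero.lt_mul_exp_iff_le WithZero.exp_ne_zero, ← WithZero.exp_add]
    simp
  rw [hle, LaurentSeries.valuation_le_iff_coeff_lt_eq_zero]
  refine ⟨fun h => ⟨fun m hm => h m (by lia), h 0 one_pos⟩, fun ⟨h, h0⟩ m hm => ?_⟩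
  obtain hm | rfl := (Int.le_of_lt_add_one hm : m ≤ 0).lt_or_eq
  exacts [h m hm, h0]

theorem laurentSeries_valuation_eq_one_iff {f : LaurentSeries F} :
    Valued.v f = 1 ↔ LaurentIsIntegral F f ∧ f.coeff 0 ≠ 0 := by
  rw [eq_iff_le_not_lt, ← laurentIsIntegral_iff_valuation_le_one,
    laurentSeries_valuation_lt_one_iff, not_and]
  tauto

variable (F) in
theorem connBorel_eq_connBorelSubgroup (n : ℕ) :
    ConnBorel F n = (connBorelSubgroup (Fin n) (Valued.v (R := LaurentSeries F)) : Set _) := by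
  ext g
  simp only [ConnBorel, Set.mem_ofPred_eq, SetLike.mem_coe, mem_connBorelSubgroup,
    laurentSeries_valuation_eq_one_iff]
  exact Iff.rfl

variable (F) in
theorem iwahori_eq_iwahoriSubgroup (n : ℕ) :
    Iwahori F n = (iwahoriSubgroup (Fin n) (Valued.v (R := LaurentSeries F)) : Set _) := by
  ext g
  simp only [Iwahori, Set.mem_ofPred_eq, SetLike.mem_coe, mem_iwahoriSubgroup,
    laurentSeries_valuation_lt_one_iff, laurentIsIntegral_iff_valuation_le_one]
  exact and_congr_right fun h => by simp [h]

variable (F) in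
theorem tparam_ne_zero : tparam F ≠ 0 :=
  HahnSeries.single_ne_zero one_ne_zero

variable (F) in
/-- The splitting `a ↦ t ^ a` of the valuation of `F((t))`. -/
def tparamZPow : Multiplicative ℤ →* (LaurentSeries F)ˣ :=
  zpowersHom _ (Units.mk0 (tparam F) (tparam_ne_zero F))

theorem coe_tparamZPow_ofAdd (a : ℤ) :
    (tparamZPow F (.ofAdd a) : LaurentSeries F) = tparam F ^ a := by
  simp [tparamZPow, zpowersHom_apply]

theorem valuation_tparam_zpow (a : ℤ) :
    Valued.v (tparam F ^ a) = WithZero.exp (-a) := by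
  rw [tparam, ← RatFunc.single_zpow, LaurentSeries.valuation_single_zpow]

variable (F) in
theorem splitsValuation_tparamZPow :
    SplitsValuation (Valued.v (R := LaurentSeries F)) (tparamZPow F) := by
  intro x
  have hx : Valued.v (x : LaurentSeries F) ≠ 0 := (Valuation.ne_zero_iff _).2 x.ne_zero
  simp only [coe_tparamZPow_ofAdd, valuation_tparam_zpow]
  refine ⟨-WithZero.log (Valued.v (x : LaurentSeries F)), ?_, fun a ha => ?_⟩
  · simp [WithZero.exp_log hx]
  · simp [← ha]

theorem isAffineLifting_iff_isMonomialLift {n : ℕ} {σ : Equiv.Perm (Fin n)} {a : Fin n → ℤ}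
    {m : Matrix.SpecialLinearGroup (Fin n) (LaurentSeries F)} :
    IsAffineLifting F n σ a m ↔ IsMonomialLift (tparamZPow F) σ a m := by
  simp only [IsAffineLifting, IsMonomialLift, ← Matrix.ext_iff, monomialMatrix_apply,
    coe_tparamZPow_ofAdd]

theorem mem_iwasawaBruhatCell_iff {n : ℕ}
    {g m : Matrix.SpecialLinearGroup (Fin n) (LaurentSeries F)} :
    g ∈ iwasawaBruhatCell Valued.v m ↔
      ∃ d ∈ ConnBorel F n, ∃ d' ∈ Iwahori F n, g = d * m * d' := by
  rw [mem_doubleCoset, connBorel_eq_connBorelSubgroup, iwahori_eq_iwahoriSubgroup]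

end Laurent

end Development

theorem iwasawa_bruhat_decomposition (F : Type) [Field F] (n : ℕ) (hn : 2 ≤ n) :
    (∀ g : Matrix.SpecialLinearGroup (Fin n) (LaurentSeries F),
      ∃ (σ : Equiv.Perm (Fin n)) (a : Fin n → ℤ), (∑ k, a k) = 0 ∧
        ∃ m, IsAffineLifting F n σ a m ∧
          ∃ d ∈ ConnBorel F n, ∃ d' ∈ Iwahori F n, g = d * m * d') ∧
    (∀ (σ σ' : Equiv.Perm (Fin n)) (a a' : Fin n → ℤ),
      (∑ k, a k) = 0 → (∑ k, a' k) = 0 →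
      ∀ m m', IsAffineLifting F n σ a m → IsAffineLifting F n σ' a' m' →
        (∃ g, (∃ d ∈ ConnBorel F n, ∃ d' ∈ Iwahori F n, g = d * m * d') ∧
              (∃ d ∈ ConnBorel F n, ∃ d' ∈ Iwahori F n, g = d * m' * d')) →
        σ = σ' ∧ a = a') := by
  obtain ⟨hexists, hunique⟩ :=
    iwasawa_bruhat_decomposition_general (ι := Fin n) (splitsValuation_tparamZPow F)
  simp only [isAffineLifting_iff_isMonomialLift, ← mem_iwasawaBruhatCell_iff]
  exact ⟨hexists, fun σ σ' a a' _ _ => hunique σ σ' a a'⟩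
end
end

section
/- For every g ∈ SL_n(k) there exists a unique permutation σ ∈ S_n such that g ∈ B(k)·m·B(k) for some monomial matrix m ∈ SL_n(k) whose nonzero entries are exactly at the positions (σ(j), j), j = 1,…,n; in other words, SL_n(k) is the disjoint union over σ ∈ S_n of the double cosets B(k)·m_σ·B(k) (Bruhat decomposition). -/
/-!
Bruhat decomposition for `SL_n` over a field `k`:
for every `g ∈ SL_n(k)` there exists a unique permutation `σ ∈ S_n` such that
`g ∈ B(k) · m · B(k)` for some monomial matrix `m ∈ SL_n(k)` of shape `σ`
(nonzero entries exactly at the positions `(σ j, j)`), where `B(k)` is the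
subgroup of upper triangular matrices of `SL_n(k)`.
-/

/-- The set of upper triangular matrices in `SL_n(k)`. -/
def BorelSL (k : Type) [Field k] (n : ℕ) :
    Set (Matrix.SpecialLinearGroup (Fin n) k) :=
  {b | ∀ i j : Fin n, j < i → (b : Matrix (Fin n) (Fin n) k) i j = 0}

/-- `m` is a monomial matrix of shape `σ`: its nonzero entries are exactly at the
positions `(σ j, j)`. -/
def IsMonomialOfShape (k : Type) [Field k] (n : ℕ)
    (σ : Equiv.Perm (Fin n)) (m : Matrix.SpecialLinearGroup (Fin n) k) : Prop :=
  ∀ i j : Fin n, (m : Matrix (Fin n) (Fin n) k) i j ≠ 0 ↔ i = σ j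

/-!
Clear the columns from left to right. In the leftmost column not yet treated take the lowest
nonzero entry as pivot: everything below it in its column is zero, and so is everything to its left
in its row, because the columns to the left have been cleared. Hence upper unitriangular row and
column operations suffice to clear the rest of its row and column, and they keep the earlier pivots
intact. This ends in a monomial matrix.

If two monomial matrices `m` and `m'`, of shapes `σ` and `τ`, satisfy `c * m = m' * d` with `c` and
`d` in the Borel subgroup, the entry of `c * m` at `(σ j, j)` is nonzero while `m' * d` vanishes at
`(τ l, j)` for `l > j`. So `τ⁻¹ * σ` never increases an index, and such a permutation of a finite
linear order is trivial.
-/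

section Order

theorem eq_id_of_injective_of_forall_le {α : Type*} [PartialOrder α] [WellFoundedLT α]
    {f : α → α} (hf : Function.Injective f) (hle : ∀ a, f a ≤ a) : f = id := by
  ext a
  induction a using WellFoundedLT.induction with
  | ind a ih =>
    by_contra hne
    have hlt : f a < a := (hle a).lt_of_ne hne
    exact hne (hf (ih (f a) hlt))

theorem exists_last_ne_zero {ι R : Type*} [LinearOrder ι] [WellFoundedGT ι] [Zero R] {f : ι → R}
    (hf : f ≠ 0) : ∃ i, f i ≠ 0 ∧ ∀ r, i < r → f r = 0 := by
  obtain ⟨i, hi, hmax⟩ := wellFounded_gt.has_min {i | f i ≠ 0} (Function.ne_iff.1 hf)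
  exact ⟨i, hi, fun r hr => not_not.1 fun hne => hmax r hne hr⟩

end Order

open Matrix

section Shape

variable {ι R : Type*}

/-- `A` is a monomial matrix of shape `σ`, with the convention of `IsMonomialOfShape`, but over an
arbitrary index type and without a condition on the determinant. -/
def HasShape [Zero R] (σ : Equiv.Perm ι) (A : Matrix ι ι R) : Prop :=
  ∀ i j, A i j ≠ 0 ↔ i = σ j

namespace HasShape

variable {σ : Equiv.Perm ι} {m : Matrix ι ι R}

theorem apply_ne_zero [Zero R] (hm : HasShape σ m) (j : ι) : m (σ j) j ≠ 0 :=
  (hm _ _).2 rfl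

theorem apply_eq_zero [Zero R] (hm : HasShape σ m) {i j : ι} (hij : i ≠ σ j) : m i j = 0 :=
  not_not.1 fun hne => hij ((hm i j).1 hne)

theorem mul_apply_right [Fintype ι] [NonUnitalNonAssocSemiring R] (hm : HasShape σ m)
    (A : Matrix ι ι R) (i j : ι) : (A * m) i j = A i (σ j) * m (σ j) j := by
  rw [mul_apply]
  refine Finset.sum_eq_single (σ j) (fun l _ hl => ?_) (by simp)
  rw [hm.apply_eq_zero hl, mul_zero]

theorem mul_apply_left [Fintype ι] [NonUnitalNonAssocSemiring R] (hm : HasShape σ m)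
    (A : Matrix ι ι R) (i j : ι) : (m * A) (σ i) j = m (σ i) i * A i j := by
  rw [mul_apply]
  refine Finset.sum_eq_single i (fun l _ hl => ?_) (by simp)
  rw [hm.apply_eq_zero (σ.injective.ne hl.symm), zero_mul]

end HasShape

/-- The entry of `A` at `(i, j)` is nonzero and is the only nonzero entry of its row and of its
column. Such entries are the pivots of the elimination that have already been treated. -/
def IsIsolated {ι' : Type*} [Zero R] (A : Matrix ι ι' R) (i : ι) (j : ι') : Prop :=
  A i j ≠ 0 ∧ (∀ r, r ≠ i → A r j = 0) ∧ ∀ c, c ≠ j → A i c = 0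

theorem exists_hasShape_of_forall_isIsolated [Finite ι] [Zero R] {A : Matrix ι ι R}
    (hA : ∀ j, ∃ i, IsIsolated A i j) : ∃ σ, HasShape σ A := by
  choose p hne hcol hrow using hA
  have hp : Function.Injective p := fun c d hcd => by
    by_contra hcd'
    exact hne c (hcd ▸ hrow d c hcd')
  refine ⟨Equiv.ofBijective p (Finite.injective_iff_bijective.1 hp), fun i j => ⟨?_, ?_⟩⟩
  · exact fun hij => not_not.1 fun hi => hij (hcol j i hi)
  · rintro rfl
    exact hne j

end Shape

section SpecialLinearGroup

variable {ι R : Type*} [Fintype ι] [DecidableEq ι] [CommRing R]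

theorem coe_inv_mul_coe (g : Matrix.SpecialLinearGroup ι R) :
    ((g⁻¹ : Matrix.SpecialLinearGroup ι R) : Matrix ι ι R) * g = 1 := by
  rw [← Matrix.SpecialLinearGroup.coe_mul, inv_mul_cancel, Matrix.SpecialLinearGroup.coe_one]

theorem coe_mul_coe_inv (g : Matrix.SpecialLinearGroup ι R) :
    (g : Matrix ι ι R) * (g⁻¹ : Matrix.SpecialLinearGroup ι R) = 1 := by
  rw [← Matrix.SpecialLinearGroup.coe_mul, mul_inv_cancel, Matrix.SpecialLinearGroup.coe_one]

end SpecialLinearGroup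

section Borel

variable {ι R : Type*} [Fintype ι] [LinearOrder ι] [CommRing R]

theorem isUpperTriangular_coe_inv {b : Matrix.SpecialLinearGroup ι R}
    (hb : (b : Matrix ι ι R).IsUpperTriangular) :
    ((b⁻¹ : Matrix.SpecialLinearGroup ι R) : Matrix ι ι R).IsUpperTriangular := by
  have hinv : (b : Matrix ι ι R)⁻¹ = (b⁻¹ : Matrix.SpecialLinearGroup ι R) :=
    inv_eq_right_inv (coe_mul_coe_inv b)
  have : Invertible (b : Matrix ι ι R) := invertibleOfIsUnitDet _ (by simp)
  exact hinv ▸ blockTriangular_inv_of_blockTriangular hb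

variable (ι R) in
/-- The Borel subgroup of upper triangular matrices of determinant one; `BorelSL k n` is its
underlying set for `ι = Fin n` and `R = k`. -/
def borelSubgroup : Subgroup (Matrix.SpecialLinearGroup ι R) where
  carrier := {b | (b : Matrix ι ι R).IsUpperTriangular}
  one_mem' := blockTriangular_one
  mul_mem' := BlockTriangular.mul
  inv_mem' := isUpperTriangular_coe_inv

theorem isUnit_apply_self_of_mem_borelSubgroup {b : Matrix.SpecialLinearGroup ι R}
    (hb : b ∈ borelSubgroup ι R) (i : ι) : IsUnit ((b : Matrix ι ι R) i i) := by
  have hprod : ∏ i, (b : Matrix ι ι R) i i = 1 := (det_of_isUpperTriangular hb).symm.trans b.det_coe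
  have hdvd : (b : Matrix ι ι R) i i ∣ ∏ i, (b : Matrix ι ι R) i i :=
    Finset.dvd_prod_of_mem (fun i => (b : Matrix ι ι R) i i) (Finset.mem_univ i)
  exact isUnit_of_dvd_one (hdvd.trans hprod.dvd)

theorem symm_apply_le_of_mul_eq_mul {σ τ : Equiv.Perm ι} {m m' : Matrix ι ι R}
    (hm : HasShape σ m) (hm' : HasShape τ m') {c d : Matrix.SpecialLinearGroup ι R}
    (hc : c ∈ borelSubgroup ι R) (hd : d ∈ borelSubgroup ι R)
    (h : (c : Matrix ι ι R) * m = m' * (d : Matrix ι ι R)) (j : ι) : τ.symm (σ j) ≤ j := by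
  by_contra! hlt
  have hne : ((c : Matrix ι ι R) * m) (σ j) j ≠ 0 := by
    rw [hm.mul_apply_right, Ne, (isUnit_apply_self_of_mem_borelSubgroup hc _).mul_right_eq_zero]
    exact hm.apply_ne_zero j
  have hzero : (m' * (d : Matrix ι ι R)) (σ j) j = 0 := by
    rw [← τ.apply_symm_apply (σ j), hm'.mul_apply_left, hd hlt, mul_zero]
  exact hne (h ▸ hzero)

theorem shape_eq_of_mul_eq_mul {σ τ : Equiv.Perm ι} {m m' : Matrix ι ι R}
    (hm : HasShape σ m) (hm' : HasShape τ m') {c d : Matrix.SpecialLinearGroup ι R}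
    (hc : c ∈ borelSubgroup ι R) (hd : d ∈ borelSubgroup ι R)
    (h : (c : Matrix ι ι R) * m = m' * (d : Matrix ι ι R)) : σ = τ := by
  have hid := eq_id_of_injective_of_forall_le (τ.symm.injective.comp σ.injective)
    (symm_apply_le_of_mul_eq_mul hm hm' hc hd h)
  ext j
  exact τ.symm_apply_eq.1 (congrFun hid j)

end Borel

section BruhatCell

variable {ι R : Type*} [Fintype ι] [LinearOrder ι] [CommRing R] {σ τ : Equiv.Perm ι}
  {A : Matrix ι ι R}

/-- The union of the double cosets `B * m * B` over the monomial matrices `m` of shape `σ`. Here `B`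
is the Borel subgroup of the special linear group and `m` may have any determinant, so that over a
field this is also the double coset of `σ` for the Borel subgroup of the general linear group. -/
def bruhatCell (σ : Equiv.Perm ι) : Set (Matrix ι ι R) :=
  {A | ∃ m, HasShape σ m ∧ ∃ b₁ ∈ borelSubgroup ι R, ∃ b₂ ∈ borelSubgroup ι R,
    A = (b₁ : Matrix ι ι R) * m * (b₂ : Matrix ι ι R)}

theorem mem_bruhatCell_of_hasShape (hA : HasShape σ A) : A ∈ bruhatCell σ :=
  ⟨A, hA, 1, one_mem _, 1, one_mem _, by simp⟩

theorem mem_bruhatCell_of_mul_mul_mem {u v : Matrix.SpecialLinearGroup ι R}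
    (hu : u ∈ borelSubgroup ι R) (hv : v ∈ borelSubgroup ι R)
    (hA : (u : Matrix ι ι R) * A * (v : Matrix ι ι R) ∈ bruhatCell σ) : A ∈ bruhatCell σ := by
  obtain ⟨m, hm, b₁, hb₁, b₂, hb₂, h⟩ := hA
  refine ⟨m, hm, u⁻¹ * b₁, mul_mem (inv_mem hu) hb₁, b₂ * v⁻¹, mul_mem hb₂ (inv_mem hv), ?_⟩
  calc
    A = (u⁻¹ : Matrix.SpecialLinearGroup ι R) * u * A *
        (v * (v⁻¹ : Matrix.SpecialLinearGroup ι R)) := by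
      rw [coe_inv_mul_coe, coe_mul_coe_inv, one_mul, mul_one]
    _ = (u⁻¹ : Matrix.SpecialLinearGroup ι R) * (u * A * v) *
        (v⁻¹ : Matrix.SpecialLinearGroup ι R) := by
      simp only [mul_assoc]
    _ = (u⁻¹ * b₁ : Matrix.SpecialLinearGroup ι R) * m *
        (b₂ * v⁻¹ : Matrix.SpecialLinearGroup ι R) := by
      simp only [h, Matrix.SpecialLinearGroup.coe_mul, mul_assoc]

theorem shape_eq_of_mem_bruhatCell (hσ : A ∈ bruhatCell σ) (hτ : A ∈ bruhatCell τ) : σ = τ := by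
  obtain ⟨m, hm, b₁, hb₁, b₂, hb₂, rfl⟩ := hσ
  obtain ⟨m', hm', c, hc, d, hd, h⟩ := mem_bruhatCell_of_mul_mul_mem hb₁ hb₂ hτ
  refine shape_eq_of_mul_eq_mul hm hm' (inv_mem hc) hd ?_
  rw [h, mul_assoc (c : Matrix ι ι R), ← mul_assoc, coe_inv_mul_coe, one_mul]

theorem coe_mem_bruhatCell_iff {g : Matrix.SpecialLinearGroup ι R} :
    (g : Matrix ι ι R) ∈ bruhatCell σ ↔
      ∃ m : Matrix.SpecialLinearGroup ι R, HasShape σ (m : Matrix ι ι R) ∧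
        ∃ b₁ ∈ borelSubgroup ι R, ∃ b₂ ∈ borelSubgroup ι R, g = b₁ * m * b₂ := by
  constructor
  · rintro ⟨m, hm, b₁, hb₁, b₂, hb₂, h⟩
    have hdet : m.det = 1 := by simpa using (congrArg det h).symm
    exact ⟨⟨m, hdet⟩, hm, b₁, hb₁, b₂, hb₂, Subtype.ext h⟩
  · rintro ⟨m, hm, b₁, hb₁, b₂, hb₂, rfl⟩
    exact ⟨m, hm, b₁, hb₁, b₂, hb₂, by simp only [Matrix.SpecialLinearGroup.coe_mul]⟩

end BruhatCell

section Shear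

variable {ι R : Type*} [Fintype ι] [CommRing R]

/-- The rank-one transvection `1 + x yᵀ`, which has determinant one because `yᵀ x = 0`. With `y` a
basis vector it performs simultaneous row operations, with `x` a basis vector column operations. -/
def shear [DecidableEq ι] (x y : ι → R) (hxy : y ⬝ᵥ x = 0) : Matrix.SpecialLinearGroup ι R :=
  ⟨1 + vecMulVec x y, by
    rw [vecMulVec_eq Unit, det_one_add_replicateCol_mul_replicateRow, hxy, add_zero]⟩

theorem shear_single_mul_apply [DecidableEq ι] {x : ι → R} {i : ι} (hx : Pi.single i 1 ⬝ᵥ x = 0)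
    (A : Matrix ι ι R) (r c : ι) :
    ((shear x (Pi.single i 1) hx : Matrix ι ι R) * A) r c = A r c + x r * A i c := by
  simp [shear, add_mul, vecMulVec_mul, vecMulVec_apply]

theorem mul_shear_single_apply [DecidableEq ι] {y : ι → R} {j : ι} (hy : y ⬝ᵥ Pi.single j 1 = 0)
    (A : Matrix ι ι R) (r c : ι) :
    (A * (shear (Pi.single j 1) y hy : Matrix ι ι R)) r c = A r c + A r j * y c := by
  simp [shear, mul_add, mul_vecMulVec, vecMulVec_apply]

theorem shear_mem_borelSubgroup [LinearOrder ι] {x y : ι → R} {hxy : y ⬝ᵥ x = 0}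
    (h : ∀ r c, c < r → x r * y c = 0) : shear x y hxy ∈ borelSubgroup ι R := by
  intro r c hcr
  have hne : r ≠ c := ne_of_gt hcr
  simp [shear, vecMulVec_apply, h r c hcr, hne]

end Shear

section Elimination

variable {ι K : Type*} [Field K]

/-- The result of using the entry of `A` at `(i, j)` as a pivot to clear the rest of its row and of
its column. -/
def clearCross [DecidableEq ι] (A : Matrix ι ι K) (i j : ι) : Matrix ι ι K :=
  of fun r c => if r = i ∧ c = j then A i j else A r c - A r j * A i c / A i j

theorem isIsolated_clearCross [DecidableEq ι] {A : Matrix ι ι K} {i j : ι} (hij : A i j ≠ 0) :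
    IsIsolated (clearCross A i j) i j :=
  ⟨by simpa [clearCross] using hij, fun r hr => by simp [clearCross, hr, hij],
    fun c hc => by simp [clearCross, hc, hij]⟩

theorem isIsolated_clearCross_of_isIsolated [DecidableEq ι] {A : Matrix ι ι K} {i j p q : ι}
    (hij : A i j ≠ 0) (hpq : IsIsolated A p q) : IsIsolated (clearCross A i j) p q := by
  obtain ⟨hne, hcol, hrow⟩ := hpq
  by_cases hqj : q = j
  · subst hqj
    obtain rfl : i = p := by
      by_contra hip
      exact hij (hcol i hip)
    exact isIsolated_clearCross hij
  · have hpj : A p j = 0 := hrow j (Ne.symm hqj)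
    have hpi : p ≠ i := by
      rintro rfl
      exact hij hpj
    have hiq : A i q = 0 := hcol i hpi.symm
    exact ⟨by simpa [clearCross, hpi, hpj] using hne,
      fun r hr => by simp [clearCross, hqj, hiq, hcol r hr],
      fun c hc => by simp [clearCross, hpi, hpj, hrow c hc]⟩

variable [Fintype ι] [LinearOrder ι]

theorem exists_mul_mul_eq_clearCross {A : Matrix ι ι K} {i j : ι} (hij : A i j ≠ 0)
    (hbelow : ∀ r, i < r → A r j = 0) (hleft : ∀ c, c < j → A i c = 0) :
    ∃ u ∈ borelSubgroup ι K, ∃ v ∈ borelSubgroup ι K,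
      (u : Matrix ι ι K) * A * (v : Matrix ι ι K) = clearCross A i j := by
  let x : ι → K := fun r => if r = i then 0 else -(A r j / A i j)
  let y : ι → K := fun c => if c = j then 0 else -(A i c / A i j)
  refine ⟨shear x (Pi.single i 1) (by simp [x]), shear_mem_borelSubgroup fun r c hcr => ?_,
    shear (Pi.single j 1) y (by simp [y]), shear_mem_borelSubgroup fun r c hcr => ?_, ?_⟩
  · obtain rfl | hc := eq_or_ne c i
    · simp [x, hbelow r hcr]
    · simp [hc]
  · obtain rfl | hr := eq_or_ne r j
    · simp [y, hleft c hcr]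
    · simp [hr]
  · ext r c
    rw [mul_shear_single_apply, shear_single_mul_apply, shear_single_mul_apply]
    obtain rfl | hr := eq_or_ne r i <;> obtain rfl | hc := eq_or_ne c j
    · simp [clearCross, x, y]
    · simp [clearCross, x, y, hc, sub_eq_add_neg, mul_div_assoc]
    · simp [clearCross, x, y, hr, sub_eq_add_neg, div_mul_eq_mul_div]
    · have hcancel : A i j / A i j = 1 := div_self hij
      simp only [clearCross, x, y, of_apply, hr, hc, if_false, false_and]
      linear_combination (A r j / A i j * A i c) * hcancel

theorem exists_mem_bruhatCell_of_isIsolated (s : Finset ι) {A : Matrix ι ι K} (hA : A.det ≠ 0)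
    (hs : ∀ j ∉ s, ∃ i, IsIsolated A i j) : ∃ σ, A ∈ bruhatCell σ := by
  induction s using Finset.induction_on_min generalizing A with
  | empty =>
    obtain ⟨σ, hσ⟩ := exists_hasShape_of_forall_isIsolated fun j => hs j (Finset.notMem_empty j)
    exact ⟨σ, mem_bruhatCell_of_hasShape hσ⟩
  | insert j s hj ih =>
    have hcol : (fun r => A r j) ≠ 0 := fun h => hA (det_eq_zero_of_column_eq_zero j (congrFun h))
    obtain ⟨i, hij, hbelow⟩ := exists_last_ne_zero hcol
    have hleft : ∀ c, c < j → A i c = 0 := fun c hc => by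
      have hcs : c ∉ insert j s := by
        rw [Finset.mem_insert, not_or]
        exact ⟨hc.ne, fun hmem => hc.not_gt (hj c hmem)⟩
      obtain ⟨p, -, hother, hrow⟩ := hs c hcs
      exact hother i fun hip => hij (hip ▸ hrow j hc.ne')
    obtain ⟨u, hu, v, hv, huv⟩ := exists_mul_mul_eq_clearCross hij hbelow hleft
    have hdet : (clearCross A i j).det ≠ 0 := by simpa [← huv] using hA
    have hclear : ∀ c ∉ s, ∃ p, IsIsolated (clearCross A i j) p c := fun c hc => by
      obtain rfl | hcj := eq_or_ne c j
      · exact ⟨i, isIsolated_clearCross hij⟩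
      · obtain ⟨p, hp⟩ := hs c (by simp [hcj, hc])
        exact ⟨p, isIsolated_clearCross_of_isIsolated hij hp⟩
    obtain ⟨σ, hσ⟩ := ih hdet hclear
    exact ⟨σ, mem_bruhatCell_of_mul_mul_mem hu hv (huv ▸ hσ)⟩

theorem bruhat_decomposition_general {A : Matrix ι ι K} (hA : A.det ≠ 0) :
    ∃! σ : Equiv.Perm ι, A ∈ bruhatCell σ := by
  obtain ⟨σ, hσ⟩ := exists_mem_bruhatCell_of_isIsolated Finset.univ hA (by simp)
  exact ⟨σ, hσ, fun τ hτ => shape_eq_of_mem_bruhatCell hτ hσ⟩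

end Elimination

theorem bruhat_decomposition (k : Type) [Field k] (n : ℕ) (hn : 2 ≤ n)
    (g : Matrix.SpecialLinearGroup (Fin n) k) :
    ∃! σ : Equiv.Perm (Fin n),
      ∃ m : Matrix.SpecialLinearGroup (Fin n) k, IsMonomialOfShape k n σ m ∧
        ∃ b₁ ∈ BorelSL k n, ∃ b₂ ∈ BorelSL k n, g = b₁ * m * b₂ :=
  (existsUnique_congr fun _ => coe_mem_bruhatCell_iff).1
    (bruhat_decomposition_general g.det_ne_zero)
end
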